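/- arXiv:1912.02432 — 4 statements merged into one kernel-verified Lean document; each statement's English description precedes it below -/
import Mathlib

section
/- For every α : ℕ → {0,1,2} and every n ∈ ℕ, |Φ(α) − 2^(−(n+1))·N(ᾱn)| ≤ 2^(−(n+1)). -/
open Filter

/-- `triN s` : numbering of the nodes of the ternary tree:
`N(⟨⟩) = 1`, `N(s * ⟨i⟩) = 2 * N(s) + i - 1`. -/
def triN (s : List (Fin 3)) : ℕ := s.foldl (fun a i => 2 * a + i.val - 1) 1

/-- Initial segment of length `n` of `α`. -/
def seg3 (α : ℕ → Fin 3) (n : ℕ) : List (Fin 3) := List.ofFn fun i : Fin n => α i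

/-- `Phi α` is the limit of the Cauchy sequence `x_α^n = 2^(-(n+1)) * N(ᾱ n)`. -/
noncomputable def Phi (α : ℕ → Fin 3) : ℝ :=
  limUnder atTop fun n => (triN (seg3 α n) : ℝ) / 2 ^ (n + 1)

/-!
Appending a digit `i` changes the approximation of length `n` by `(i - 1) / 2 ^ (n + 2)`, and
`|i - 1| ≤ 1`, so the distance from the `n`-th approximation to the limit is at most the geometric
tail `∑ k ≥ n, 1 / 2 ^ (k + 2) = 1 / 2 ^ (n + 1)`.
-/

theorem triN_concat (s : List (Fin 3)) (i : Fin 3) :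
    triN (s ++ [i]) = 2 * triN s + i.val - 1 := by
  simp only [triN, List.foldl_append, List.foldl_cons, List.foldl_nil]

theorem triN_pos (s : List (Fin 3)) : 0 < triN s := by
  induction s using List.reverseRecOn with
  | nil => exact Nat.one_pos
  | append_singleton s i ih =>
    rw [triN_concat]
    omega

-- Positivity of `triN s` keeps the truncated subtraction in `triN` from truncating.
theorem cast_triN_concat (s : List (Fin 3)) (i : Fin 3) :
    (triN (s ++ [i]) : ℝ) = 2 * triN s + ((i.val : ℝ) - 1) := by
  have one_le : 1 ≤ 2 * triN s + i.val := by
    have := triN_pos s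
    omega
  rw [triN_concat, Nat.cast_sub one_le]
  push_cast
  ring

theorem seg3_succ (α : ℕ → Fin 3) (n : ℕ) : seg3 α (n + 1) = seg3 α n ++ [α n] :=
  List.ofFn_succ_last

theorem abs_digit_sub_one_le_one (i : Fin 3) : |(i.val : ℝ) - 1| ≤ 1 := by
  fin_cases i <;> norm_num

/-- The `n`-th approximation `x_α^n = 2^(-(n+1)) * N(ᾱ n)` of `Phi α`. -/
noncomputable def phiApprox (α : ℕ → Fin 3) (n : ℕ) : ℝ :=
  (triN (seg3 α n) : ℝ) / 2 ^ (n + 1)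

theorem phiApprox_succ (α : ℕ → Fin 3) (n : ℕ) :
    phiApprox α (n + 1) = phiApprox α n + (((α n).val : ℝ) - 1) / 2 ^ (n + 2) := by
  rw [phiApprox, phiApprox, seg3_succ, cast_triN_concat]
  field_simp
  ring

-- Written as `C / 2 / 2 ^ n` with `C = 1 / 2`, the form `cauchySeq_of_le_geometric_two` expects.
theorem dist_phiApprox_succ_le (α : ℕ → Fin 3) (n : ℕ) :
    dist (phiApprox α n) (phiApprox α (n + 1)) ≤ 1 / 2 / 2 / 2 ^ n :=
  calc dist (phiApprox α n) (phiApprox α (n + 1))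
      = |((α n).val : ℝ) - 1| / 2 ^ (n + 2) := by
        rw [phiApprox_succ, dist_self_add_right, Real.norm_eq_abs, abs_div, abs_pow, abs_two]
    _ ≤ 1 / 2 ^ (n + 2) := by
        gcongr
        exact abs_digit_sub_one_le_one (α n)
    _ = 1 / 2 / 2 / 2 ^ n := by ring

theorem tendsto_phiApprox (α : ℕ → Fin 3) : Tendsto (phiApprox α) atTop (nhds (Phi α)) :=
  (cauchySeq_of_le_geometric_two (dist_phiApprox_succ_le α)).tendsto_limUnder

theorem stmt2 (α : ℕ → Fin 3) (n : ℕ) :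
    |Phi α - (triN (seg3 α n) : ℝ) / 2 ^ (n + 1)| ≤ 1 / 2 ^ (n + 1) := by
  calc |Phi α - phiApprox α n|
      = dist (phiApprox α n) (Phi α) := by rw [dist_comm, Real.dist_eq]
    _ ≤ 1 / 2 / 2 ^ n :=
      dist_le_of_le_geometric_two_of_tendsto (dist_phiApprox_succ_le α) (tendsto_phiApprox α) n
    _ = 1 / 2 ^ (n + 1) := by ring
end

section
/- For every regular sequence x : ℕ → ℚ whose limit lies in [0,1], the path α_x : ℕ → {0,1,2} is well defined (at each stage a suitable digit i exists) and Φ(α_x) = lim x. -/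
open Filter

/-- A regular sequence of rationals: `|r n - r (n+1)| ≤ 2^(-(n+1))`. -/
def Regular (r : ℕ → ℚ) : Prop := ∀ n : ℕ, |r n - r (n + 1)| ≤ 1 / 2 ^ (n + 1)

/-- The real number determined by a (regular, hence Cauchy) sequence of rationals. -/
noncomputable def rlim (r : ℕ → ℚ) : ℝ := limUnder atTop fun n => (r n : ℝ)

/-- The rational interval `I_s = [2^(-(|s|+1))·(N s - 1), 2^(-(|s|+1))·(N s + 1)]`,
given by its pair of endpoints. -/
def Iseg (s : List (Fin 3)) : ℚ × ℚ :=
  (((triN s : ℚ) - 1) / 2 ^ (s.length + 1), ((triN s : ℚ) + 1) / 2 ^ (s.length + 1))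

/-- The interval `I^x_n = [max(x(n+3) - 2^(-(n+3)), 0), min(x(n+3) + 2^(-(n+3)), 1)]`. -/
def Ix (x : ℕ → ℚ) (n : ℕ) : ℚ × ℚ :=
  (max (x (n + 3) - 1 / 2 ^ (n + 3)) 0, min (x (n + 3) + 1 / 2 ^ (n + 3)) 1)

/-- `intSub I J` : the interval `I` is contained in the interval `J` (`I ⊑ J`). -/
def intSub (I J : ℚ × ℚ) : Prop := J.1 ≤ I.1 ∧ I.2 ≤ J.2

instance (I J : ℚ × ℚ) : Decidable (intSub I J) := by unfold intSub; infer_instance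

/-- The least digit `i ∈ {0,1,2}` with `I^x_n ⊑ I_{s*⟨i⟩}` (with fallback value `2`). -/
def pick (x : ℕ → ℚ) (n : ℕ) (s : List (Fin 3)) : Fin 3 :=
  if intSub (Ix x n) (Iseg (s ++ [0])) then 0
  else if intSub (Ix x n) (Iseg (s ++ [1])) then 1
  else 2

/-- The finite path of length `n` determined by the regular sequence `x`. -/
def pathOf (x : ℕ → ℚ) : ℕ → List (Fin 3)
  | 0 => []
  | n + 1 => pathOf x n ++ [pick x n (pathOf x n)]

/-- The path `α_x : ℕ → {0,1,2}` determined by the regular sequence `x`. -/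
def alphaX (x : ℕ → ℚ) (n : ℕ) : Fin 3 := pick x n (pathOf x n)

/-!
Put `δ = 2^(-(|s|+2))`. If `I_s` has left endpoint `a`, then `I_s = [a, a + 4δ]`, and its three
children are the overlapping intervals `[a + iδ, a + (i+2)δ]`. Hence any interval inside `I_s` of
length at most `δ` fits into one of the children. The interval `I^x_n` has length at most
`2^(-(n+2))`, which is `δ` for `|s| = n`, and by regularity the intervals `I^x_n` decrease with
`n`, so a digit exists at every stage. Finally `lim x` belongs to every `I^x_n`, hence to every
interval along the path `α_x`, and the midpoints of these intervals converge to `Φ(α_x)`.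
-/

namespace intSub

variable {I J K : ℚ × ℚ}

theorem trans (hIJ : intSub I J) (hJK : intSub J K) : intSub I K :=
  ⟨hJK.1.trans hIJ.1, hIJ.2.trans hJK.2⟩

theorem Icc_subset_Icc (h : intSub I J) : Set.Icc (I.1 : ℝ) I.2 ⊆ Set.Icc (J.1 : ℝ) J.2 :=
  Set.Icc_subset_Icc (mod_cast h.1) (mod_cast h.2)

end intSub

namespace Regular

variable {x : ℕ → ℚ}

theorem dist_succ_le (hx : Regular x) (n : ℕ) :
    dist (x n : ℝ) (x (n + 1)) ≤ 1 / 2 / 2 ^ n := by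
  calc dist (x n : ℝ) (x (n + 1)) = |(x n : ℝ) - x (n + 1)| := Real.dist_eq _ _
    _ ≤ 1 / 2 ^ (n + 1) := by simpa using (Rat.cast_le (K := ℝ)).2 (hx n)
    _ = 1 / 2 / 2 ^ n := by rw [pow_succ', div_div]

theorem tendsto_rlim (hx : Regular x) : Tendsto (fun n => (x n : ℝ)) atTop (nhds (rlim x)) :=
  (cauchySeq_of_le_geometric_two hx.dist_succ_le).tendsto_limUnder

theorem abs_sub_rlim_le (hx : Regular x) (n : ℕ) : |(x n : ℝ) - rlim x| ≤ 1 / 2 ^ n :=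
  dist_le_of_le_geometric_two_of_tendsto hx.dist_succ_le hx.tendsto_rlim n

end Regular

theorem triN_append_singleton (s : List (Fin 3)) (i : Fin 3) :
    triN (s ++ [i]) = 2 * triN s + i - 1 := by
  simp [triN]

theorem cast_triN_append_singleton {R : Type*} [Ring R] (s : List (Fin 3)) (i : Fin 3) :
    (triN (s ++ [i]) : R) = 2 * triN s + (i : ℕ) - 1 := by
  have one_le : 1 ≤ 2 * triN s + i := by have := triN_pos s; omega
  rw [triN_append_singleton, Nat.cast_sub one_le]
  push_cast
  rfl

theorem Iseg_snd (s : List (Fin 3)) :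
    (Iseg s).2 = (Iseg s).1 + 4 / 2 ^ (s.length + 2) := by
  simp only [Iseg, pow_succ]
  field_simp
  ring

theorem Iseg_append_singleton (s : List (Fin 3)) (i : Fin 3) :
    Iseg (s ++ [i]) = ((Iseg s).1 + (i : ℕ) / 2 ^ (s.length + 2),
      (Iseg s).1 + ((i : ℕ) + 2) / 2 ^ (s.length + 2)) := by
  simp only [Iseg, cast_triN_append_singleton, List.length_append, List.length_singleton, pow_succ]
  ext <;> field_simp <;> ring

theorem exists_intSub_Iseg_append {I : ℚ × ℚ} {s : List (Fin 3)} (hIs : intSub I (Iseg s))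
    (hI : I.2 - I.1 ≤ 1 / 2 ^ (s.length + 2)) : ∃ i : Fin 3, intSub I (Iseg (s ++ [i])) := by
  obtain ⟨hleft, hright⟩ := hIs
  rw [Iseg_snd] at hright
  simp only [Iseg_append_singleton, intSub, div_eq_mul_inv, one_mul] at hright hI ⊢
  generalize (Iseg s).1 = a, ((2 : ℚ) ^ (s.length + 2))⁻¹ = δ at hleft hright hI ⊢
  rcases le_or_gt I.2 (a + 2 * δ) with h₂ | h₂
  · exact ⟨0, by norm_num; constructor <;> linarith⟩
  rcases le_or_gt I.2 (a + 3 * δ) with h₃ | h₃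
  · exact ⟨1, by norm_num; constructor <;> linarith⟩
  · exact ⟨2, by norm_num; constructor <;> linarith⟩

theorem abs_triN_div_sub_le {s : List (Fin 3)} {t : ℝ}
    (ht : t ∈ Set.Icc ((Iseg s).1 : ℝ) (Iseg s).2) :
    |(triN s : ℝ) / 2 ^ (s.length + 1) - t| ≤ 1 / 2 ^ (s.length + 1) := by
  obtain ⟨hleft, hright⟩ := ht
  simp only [Iseg, sub_div, add_div] at hleft hright
  push_cast at hleft hright
  rw [abs_le]
  constructor <;> linarith

theorem length_seg3 (α : ℕ → Fin 3) (n : ℕ) : (seg3 α n).length = n :=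
  List.length_ofFn

theorem Phi_eq_of_forall_mem_Iseg {α : ℕ → Fin 3} {t : ℝ}
    (ht : ∀ n, t ∈ Set.Icc ((Iseg (seg3 α n)).1 : ℝ) (Iseg (seg3 α n)).2) : Phi α = t := by
  have dist_le (n : ℕ) : dist ((triN (seg3 α n) : ℝ) / 2 ^ (n + 1)) t ≤ 1 / 2 / 2 ^ n := by
    calc dist ((triN (seg3 α n) : ℝ) / 2 ^ (n + 1)) t
        ≤ 1 / 2 ^ (n + 1) := by
          simpa only [length_seg3, Real.dist_eq] using abs_triN_div_sub_le (ht n)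
      _ = 1 / 2 / 2 ^ n := by rw [pow_succ', div_div]
  have bound_tendsto : Tendsto (fun n : ℕ => (1 : ℝ) / 2 / 2 ^ n) atTop (nhds 0) :=
    (summable_geometric_two' 1).tendsto_atTop_zero
  exact (tendsto_iff_dist_tendsto_zero.2
    (squeeze_zero (fun _ => dist_nonneg) dist_le bound_tendsto)).limUnder_eq

theorem intSub_Iseg_append_pick {x : ℕ → ℚ} {n : ℕ} {s : List (Fin 3)}
    (h : ∃ i : Fin 3, intSub (Ix x n) (Iseg (s ++ [i]))) :
    intSub (Ix x n) (Iseg (s ++ [pick x n s])) := by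
  unfold pick
  split_ifs with h₀ h₁
  · exact h₀
  · exact h₁
  · simpa [Fin.exists_fin_succ, h₀, h₁] using h

theorem seg3_alphaX (x : ℕ → ℚ) (n : ℕ) : seg3 (alphaX x) n = pathOf x n := by
  induction n with
  | zero => rfl
  | succ n ih => rw [seg3_succ, ih, pathOf, alphaX]

theorem length_pathOf (x : ℕ → ℚ) (n : ℕ) : (pathOf x n).length = n := by
  rw [← seg3_alphaX, length_seg3]

theorem Ix_snd_sub_fst_le (x : ℕ → ℚ) (n : ℕ) : (Ix x n).2 - (Ix x n).1 ≤ 1 / 2 ^ (n + 2) := by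
  calc (Ix x n).2 - (Ix x n).1
      ≤ (x (n + 3) + 1 / 2 ^ (n + 3)) - (x (n + 3) - 1 / 2 ^ (n + 3)) :=
        sub_le_sub (min_le_left _ _) (le_max_left _ _)
    _ = 1 / 2 ^ (n + 2) := by rw [pow_succ _ (n + 2)]; field_simp; ring

theorem exists_intSub_Iseg_pathOf_append {x : ℕ → ℚ} {n : ℕ}
    (h : intSub (Ix x n) (Iseg (pathOf x n))) :
    ∃ i : Fin 3, intSub (Ix x n) (Iseg (pathOf x n ++ [i])) := by
  refine exists_intSub_Iseg_append h ?_
  rw [length_pathOf]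
  exact Ix_snd_sub_fst_le x n

namespace Regular

variable {x : ℕ → ℚ}

theorem Ix_succ_intSub_Ix (hx : Regular x) (n : ℕ) : intSub (Ix x (n + 1)) (Ix x n) := by
  obtain ⟨hlower, hupper⟩ := abs_le.1 (hx (n + 3))
  have halves : (1 : ℚ) / 2 ^ (n + 3) = 1 / 2 ^ (n + 3 + 1) + 1 / 2 ^ (n + 3 + 1) := by
    rw [pow_succ _ (n + 3)]; field_simp; norm_num
  have hindex : n + 1 + 3 = n + 3 + 1 := by omega
  simp only [intSub, Ix, hindex]
  exact ⟨max_le_max_right 0 (by linarith), min_le_min_right 1 (by linarith)⟩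

theorem Ix_intSub_Iseg_pathOf (hx : Regular x) (n : ℕ) :
    intSub (Ix x n) (Iseg (pathOf x n)) := by
  induction n with
  | zero => simp [intSub, Ix, Iseg, pathOf, triN]
  | succ n ih =>
    exact (hx.Ix_succ_intSub_Ix n).trans
      (intSub_Iseg_append_pick (exists_intSub_Iseg_pathOf_append ih))

theorem rlim_mem_Ix (hx : Regular x) (hx01 : rlim x ∈ Set.Icc (0 : ℝ) 1) (n : ℕ) :
    rlim x ∈ Set.Icc ((Ix x n).1 : ℝ) (Ix x n).2 := by
  obtain ⟨hlower, hupper⟩ := abs_le.1 (hx.abs_sub_rlim_le (n + 3))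
  simp only [Ix]
  push_cast
  exact ⟨max_le (by linarith) hx01.1, le_min (by linarith) hx01.2⟩

end Regular

theorem stmt4 (x : ℕ → ℚ) (hx : Regular x) (hx01 : rlim x ∈ Set.Icc (0 : ℝ) 1) :
    (∀ n : ℕ, ∃ i : Fin 3, intSub (Ix x n) (Iseg (pathOf x n ++ [i]))) ∧
      Phi (alphaX x) = rlim x := by
  refine ⟨fun n => exists_intSub_Iseg_pathOf_append (hx.Ix_intSub_Iseg_pathOf n),
    Phi_eq_of_forall_mem_Iseg fun n => ?_⟩
  rw [seg3_alphaX]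
  exact (hx.Ix_intSub_Iseg_pathOf n).Icc_subset_Icc (hx.rlim_mem_Ix hx01 n)
end

section
/- If f : ({0,1}^ℕ) → ℝ has a continuous modulus, then f has a continuous modulus g : ℕ → ({0,1}^ℕ) → ℕ such that for each k ∈ ℕ the function g_k is a modulus of itself, i.e., for all α, β agreeing on their first g_k(α) values, g_k(α) = g_k(β). -/
/-- Initial segment of length `n` of a binary sequence `α`. -/
def seg2 (α : ℕ → Fin 2) (n : ℕ) : List (Fin 2) := List.ofFn fun i : Fin n => α i

/-- `g` is a modulus of (pointwise continuity of) `f : 2^ℕ → ℝ`. -/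
def IsModulusR (f : (ℕ → Fin 2) → ℝ) (g : ℕ → (ℕ → Fin 2) → ℕ) : Prop :=
  ∀ (k : ℕ) (α β : ℕ → Fin 2), seg2 α (g k α) = seg2 β (g k α) → |f α - f β| ≤ 1 / 2 ^ k

/-- `g : 2^ℕ → ℕ` is pointwise continuous. -/
def PwCont (g : (ℕ → Fin 2) → ℕ) : Prop :=
  ∀ α : ℕ → Fin 2, ∃ n : ℕ, ∀ β : ℕ → Fin 2, seg2 α n = seg2 β n → g α = g β

/-!
Let `g k x` be the least `n` such that `f` oscillates by at most `2⁻ᵏ` on the cylinder of length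
`n` around `x`. Such an `n` exists because any modulus of `f` at precision `k + 1` supplies one.
Oscillation is a property of the cylinder and not of its centre, so a point that agrees with `x` on
the first `g k x` entries has the same cylinders up to that length, hence the same least `n`.
-/

open PiNat

section Cylinder

variable {E : ℕ → Type*}

/-- The least length `n` for which the cylinder of length `n` around `x` has the property `P`, used
to build moduli. If no cylinder around `x` has the property, the value is the junk `sInf ∅ = 0`. -/
noncomputable def minCylinderLength (P : Set (∀ n, E n) → Prop) (x : ∀ n, E n) : ℕ :=
  sInf {n | P (cylinder x n)}

theorem minCylinderLength_le {P : Set (∀ n, E n) → Prop} {x : ∀ n, E n} {n : ℕ}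
    (hn : P (cylinder x n)) : minCylinderLength P x ≤ n :=
  Nat.sInf_le hn

theorem minCylinderLength_spec {P : Set (∀ n, E n) → Prop} {x : ∀ n, E n}
    (hx : ∃ n, P (cylinder x n)) : P (cylinder x (minCylinderLength P x)) :=
  Nat.sInf_mem hx

/-- `g` is a modulus of itself: `g x` is determined by the first `g x` entries of `x`. -/
def IsSelfModulus (g : (∀ n, E n) → ℕ) : Prop :=
  ∀ x, ∀ y ∈ cylinder x (g x), g x = g y

theorem isSelfModulus_minCylinderLength {P : Set (∀ n, E n) → Prop}
    (hP : ∀ x, ∃ n, P (cylinder x n)) : IsSelfModulus (minCylinderLength P) := by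
  intro x y hy
  have cylinder_eq {m : ℕ} (hm : m ≤ minCylinderLength P x) : cylinder y m = cylinder x m :=
    mem_cylinder_iff_eq.1 (cylinder_anti x hm hy)
  have le_x : minCylinderLength P y ≤ minCylinderLength P x :=
    minCylinderLength_le (cylinder_eq le_rfl ▸ minCylinderLength_spec (hP x))
  have le_y : minCylinderLength P x ≤ minCylinderLength P y :=
    minCylinderLength_le (cylinder_eq le_x ▸ minCylinderLength_spec (hP y))
  exact le_antisymm le_y le_x

variable {X : Type*} [PseudoMetricSpace X]

/-- `g` is a modulus of `f`, for sequences with entries in arbitrary types and values in a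
pseudometric space. Agreement of `x` and `y` on the first `n` entries is encoded as
`y ∈ cylinder x n`. -/
def IsCylinderModulus (f : (∀ n, E n) → X) (g : ℕ → (∀ n, E n) → ℕ) : Prop :=
  ∀ k x, ∀ y ∈ cylinder x (g k x), dist (f x) (f y) ≤ 1 / 2 ^ k

/-- The oscillation of `f` on the set `s` is at most `ε`, stated pointwise to avoid the junk value
of `Metric.diam` on unbounded sets. -/
def OscillationLE {Y : Type*} (f : Y → X) (ε : ℝ) (s : Set Y) : Prop :=
  ∀ y ∈ s, ∀ z ∈ s, dist (f y) (f z) ≤ ε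

theorem IsCylinderModulus.oscillationLE {f : (∀ n, E n) → X} {g : ℕ → (∀ n, E n) → ℕ}
    (hg : IsCylinderModulus f g) (k : ℕ) (x : ∀ n, E n) :
    OscillationLE f (1 / 2 ^ k) (cylinder x (g (k + 1) x)) := by
  intro y hy z hz
  calc dist (f y) (f z)
      ≤ dist (f x) (f y) + dist (f x) (f z) := dist_triangle_left _ _ _
    _ ≤ 1 / 2 ^ (k + 1) + 1 / 2 ^ (k + 1) := add_le_add (hg _ x y hy) (hg _ x z hz)
    _ = 1 / 2 ^ k := by rw [pow_succ, ← div_div, add_halves]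

theorem isCylinderModulus_minCylinderLength {f : (∀ n, E n) → X}
    (hf : ∀ k x, ∃ n, OscillationLE f (1 / 2 ^ k) (cylinder x n)) :
    IsCylinderModulus f fun k => minCylinderLength (OscillationLE f (1 / 2 ^ k)) :=
  fun k x y hy => minCylinderLength_spec (hf k x) x (self_mem_cylinder x _) y hy

theorem stmt10_general (f : (∀ n, E n) → X) (h : ∃ g, IsCylinderModulus f g) :
    ∃ g, IsCylinderModulus f g ∧ ∀ k, IsSelfModulus (g k) := by
  obtain ⟨g, hg⟩ := h
  have hf (k : ℕ) (x : ∀ n, E n) : ∃ n, OscillationLE f (1 / 2 ^ k) (cylinder x n) :=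
    ⟨_, hg.oscillationLE k x⟩
  exact ⟨_, isCylinderModulus_minCylinderLength hf,
    fun k => isSelfModulus_minCylinderLength (hf k)⟩

end Cylinder

theorem seg2_eq_seg2_iff {α β : ℕ → Fin 2} {n : ℕ} :
    seg2 α n = seg2 β n ↔ β ∈ cylinder α n := by
  rw [mem_cylinder_comm, seg2, seg2, List.ofFn_inj, funext_iff, Fin.forall_iff]
  rfl

theorem isModulusR_iff {f : (ℕ → Fin 2) → ℝ} {g : ℕ → (ℕ → Fin 2) → ℕ} :
    IsModulusR f g ↔ IsCylinderModulus f g := by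
  simp only [IsModulusR, IsCylinderModulus, seg2_eq_seg2_iff, Real.dist_eq]

theorem isSelfModulus_iff {g : (ℕ → Fin 2) → ℕ} :
    IsSelfModulus g ↔ ∀ α β : ℕ → Fin 2, seg2 α (g α) = seg2 β (g α) → g α = g β := by
  simp only [IsSelfModulus, seg2_eq_seg2_iff]

theorem IsSelfModulus.pwCont {g : (ℕ → Fin 2) → ℕ} (hg : IsSelfModulus g) : PwCont g :=
  fun α => ⟨g α, isSelfModulus_iff.1 hg α⟩

theorem stmt10 (f : (ℕ → Fin 2) → ℝ)
    (h : ∃ g : ℕ → (ℕ → Fin 2) → ℕ, IsModulusR f g ∧ ∀ k, PwCont (g k)) :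
    ∃ g : ℕ → (ℕ → Fin 2) → ℕ, IsModulusR f g ∧ (∀ k, PwCont (g k)) ∧
      ∀ (k : ℕ) (α β : ℕ → Fin 2), seg2 α (g k α) = seg2 β (g k α) → g k α = g k β := by
  obtain ⟨g, hg, hself⟩ := stmt10_general f (h.imp fun _ hg => isModulusR_iff.1 hg.1)
  exact ⟨g, isModulusR_iff.2 hg, fun k => (hself k).pwCont, fun k => isSelfModulus_iff.1 (hself k)⟩
end

section
/- If f : [0,1] → ℝ has a uniformly continuous ternary modulus, then f is uniformly continuous on [0,1]. -/
open Filter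

/-- `x` is a regular sequence representing a real number in the unit interval. -/
noncomputable def InUnit (x : ℕ → ℚ) : Prop := Regular x ∧ rlim x ∈ Set.Icc (0 : ℝ) 1

/-- `f : [0,1] → ℝ` has a continuous modulus: a family `g k` of pointwise continuous
functions on the underlying set of regular sequences in `[0,1]` such that
`|x - y| ≤ 2^(-(g k x))` implies `|f x - f y| ≤ 2^(-k)`. -/
def HasContModulus (f : ℝ → ℝ) : Prop :=
  ∃ g : ℕ → (ℕ → ℚ) → ℕ,
    (∀ (k : ℕ) (x y : ℕ → ℚ), InUnit x → InUnit y →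
      |rlim x - rlim y| ≤ 1 / 2 ^ g k x → |f (rlim x) - f (rlim y)| ≤ 1 / 2 ^ k) ∧
    (∀ (k : ℕ) (x : ℕ → ℚ), InUnit x → ∃ n : ℕ, ∀ y : ℕ → ℚ, InUnit y →
      (∀ i < n, x i = y i) → g k x = g k y)

/-- `f : [0,1] → ℝ` has a continuous ternary modulus: a family `g k` of pointwise
continuous functions on `{0,1,2}^ℕ` such that `|Φ α - x| ≤ 2^(-(g k α))` implies
`|f (Φ α) - f x| ≤ 2^(-k)`. -/
def HasContTernModulus (f : ℝ → ℝ) : Prop :=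
  ∃ g : ℕ → (ℕ → Fin 3) → ℕ,
    (∀ (k : ℕ) (α : ℕ → Fin 3), ∀ x ∈ Set.Icc (0 : ℝ) 1,
      |Phi α - x| ≤ 1 / 2 ^ g k α → |f (Phi α) - f x| ≤ 1 / 2 ^ k) ∧
    (∀ (k : ℕ) (α : ℕ → Fin 3), ∃ n : ℕ, ∀ β : ℕ → Fin 3,
      seg3 α n = seg3 β n → g k α = g k β)

/-- `f : [0,1] → ℝ` is uniformly continuous on the unit interval, with a modulus `ω`. -/
def UnifContOn (f : ℝ → ℝ) : Prop :=
  ∃ ω : ℕ → ℕ, ∀ k : ℕ, ∀ x ∈ Set.Icc (0 : ℝ) 1, ∀ y ∈ Set.Icc (0 : ℝ) 1,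
    |x - y| ≤ 1 / 2 ^ ω k → |f x - f y| ≤ 1 / 2 ^ k

/-!
A modulus that depends only on the first `n` digits takes at most `3 ^ n` values, so each `g k` is
bounded, say by `ω k`; as `Φ` maps onto `[0,1]`, this `ω` is a modulus of uniform continuity. For
surjectivity, unfolding the recursion gives `Φ(α) = ∑ αᵢ / 2 ^ (i + 2)`, so that doubling the binary
digits of `x ∈ [0,1]` produces a preimage of `x`.
-/

theorem finite_range_of_factorsThrough {X Y Z : Type*} {g : X → Z} {p : X → Y}
    (h : g.FactorsThrough p) (hp : (Set.range p).Finite) : (Set.range g).Finite := by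
  cases isEmpty_or_nonempty Z with
  | inl _ => exact Set.toFinite _
  | inr _ =>
    obtain ⟨e, rfl⟩ := (Function.factorsThrough_iff g).1 h
    rw [Set.range_comp]
    exact hp.image e

theorem triN_append_singleton_add_one (s : List (Fin 3)) (i : Fin 3) :
    triN (s ++ [i]) + 1 = 2 * triN s + i := by
  have unfold_append : triN (s ++ [i]) = 2 * triN s + i - 1 := by simp [triN]
  have := triN_pos s
  omega

theorem triN_seg3_div_two_pow (α : ℕ → Fin 3) (n : ℕ) :
    (triN (seg3 α n) : ℝ) / 2 ^ (n + 1) =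
      1 / 2 ^ (n + 1) + ∑ i ∈ Finset.range n, (α i : ℝ) / 2 ^ (i + 2) := by
  induction n with
  | zero => simp [triN, seg3]
  | succ n ih =>
    have recursion : (triN (seg3 α (n + 1)) : ℝ) = 2 * triN (seg3 α n) + α n - 1 := by
      rw [seg3_succ, eq_sub_iff_add_eq]
      exact_mod_cast triN_append_singleton_add_one (seg3 α n) (α n)
    calc (triN (seg3 α (n + 1)) : ℝ) / 2 ^ (n + 1 + 1)
        = triN (seg3 α n) / 2 ^ (n + 1) + α n / 2 ^ (n + 2) - 1 / 2 ^ (n + 2) := by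
          rw [recursion]
          ring
      _ = 1 / 2 ^ (n + 1 + 1) + ∑ i ∈ Finset.range (n + 1), (α i : ℝ) / 2 ^ (i + 2) := by
          rw [ih, Finset.sum_range_succ]
          ring

theorem Phi_eq_of_hasSum {α : ℕ → Fin 3} {x : ℝ}
    (h : HasSum (fun i ↦ (α i : ℝ) / 2 ^ (i + 2)) x) : Phi α = x := by
  have tendsto_zero : Tendsto (fun n : ℕ ↦ (1 : ℝ) / 2 ^ (n + 1)) atTop (nhds 0) := by
    simpa only [one_div, inv_pow, Function.comp_def] using
      (tendsto_pow_atTop_nhds_zero_of_lt_one (by norm_num) two_inv_lt_one).comp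
        (tendsto_add_atTop_nat 1)
  apply Tendsto.limUnder_eq
  simpa only [triN_seg3_div_two_pow, zero_add] using tendsto_zero.add h.tendsto_sum_nat

theorem Phi_two_mul_eq_ofDigits (b : ℕ → Fin 2) :
    Phi (fun i ↦ ⟨2 * b i, by omega⟩) = Real.ofDigits b := by
  have hasSum_digits : HasSum (Real.ofDigitsTerm b) (Real.ofDigits b) :=
    Real.summable_ofDigitsTerm.hasSum
  apply Phi_eq_of_hasSum
  convert hasSum_digits using 2 with i
  simp only [Real.ofDigitsTerm]
  push_cast
  ring

theorem surjOn_Phi : Set.SurjOn Phi Set.univ (Set.Icc 0 1) := fun x hx ↦ by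
  obtain ⟨b, -, rfl⟩ := Real.ofDigits_SurjOn one_lt_two hx
  exact ⟨_, Set.mem_univ _, Phi_two_mul_eq_ofDigits b⟩

theorem finite_range_seg3 (n : ℕ) : (Set.range fun α ↦ seg3 α n).Finite :=
  (Set.finite_range (List.ofFn (n := n) (α := Fin 3))).subset <|
    Set.range_subset_iff.2 fun _ ↦ Set.mem_range_self _

theorem stmt13 (f : ℝ → ℝ)
    (h : ∃ g : ℕ → (ℕ → Fin 3) → ℕ,
      (∀ (k : ℕ) (α : ℕ → Fin 3), ∀ x ∈ Set.Icc (0 : ℝ) 1,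
        |Phi α - x| ≤ 1 / 2 ^ g k α → |f (Phi α) - f x| ≤ 1 / 2 ^ k) ∧
      (∀ k : ℕ, ∃ n : ℕ, ∀ α β : ℕ → Fin 3, seg3 α n = seg3 β n → g k α = g k β)) :
    UnifContOn f := by
  obtain ⟨g, modulus, uniform⟩ := h
  have bounded (k : ℕ) : ∃ M, ∀ α, g k α ≤ M := by
    obtain ⟨n, hn⟩ := uniform k
    obtain ⟨M, hM⟩ := (finite_range_of_factorsThrough hn (finite_range_seg3 n)).bddAbove
    exact ⟨M, fun α ↦ hM (Set.mem_range_self α)⟩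
  choose ω hω using bounded
  refine ⟨ω, fun k x hx y hy hxy ↦ ?_⟩
  obtain ⟨α, -, rfl⟩ := surjOn_Phi hx
  refine modulus k α y hy (hxy.trans ?_)
  gcongr
  · exact one_le_two
  · exact hω k α
end
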